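/- Let Φ be of type B_n, C_n, or D_n and suppose (S, S̄) > (S', S̄') are two equivalent separable pairs in 𝒟 for the system (Φ, Φ_I, Φ_J), with a shortest fundamental chain (S_1, S̄_1) ∼ (S_2, S̄_2) ∼ … ∼ (S_k, S̄_k) from (S, S̄) to (S', S̄'). Then: (1) for every 1 ≤ i < k, S_i = S_{i+1} or S̄_i = S̄_{i+1}; (2) for all 1 ≤ i < j ≤ k, S_i ≠ S_j (resp. S̄_i ≠ S̄_j) unless j = i+1; (3) (S_1, S̄_1) > (S_2, S̄_2) > … > (S_k, S̄_k). -/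

import Mathlib

namespace JantzenBlocks

open scoped Classical

/-- The three classical types `B`, `C`, `D`. -/
inductive CType : Type
  | B | C | D
deriving DecidableEq

/-- The weight space `ℝ^n`. -/
abbrev V (n : ℕ) := Fin n → ℝ

noncomputable section

/-- The standard inner product on `ℝ^n`. -/
def inn {n : ℕ} (x y : V n) : ℝ := ∑ i, x i * y i

/-- The standard basis vector `e i`. -/
def ee {n : ℕ} (i : Fin n) : V n := Pi.single i 1

/-- The reflection `s_v` in the vector `v`. -/
def sRefl {n : ℕ} (v x : V n) : V n := x - (2 * inn x v / inn v v) • v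

/-- The roots `±e_i ± e_j` (`i ≠ j`), i.e. the root system of type `D_n`. -/
def DRoots (n : ℕ) : Set (V n) :=
  {v | ∃ i j : Fin n, i ≠ j ∧ (v = ee i + ee j ∨ v = ee i - ee j ∨ v = -ee i - ee j)}

/-- The ambient root system `Φ` of type `B_n`, `C_n` or `D_n`. -/
def Phi (n : ℕ) : CType → Set (V n)
  | CType.B => DRoots n ∪ {v | ∃ i : Fin n, v = ee i ∨ v = -ee i}
  | CType.C => DRoots n ∪ {v | ∃ i : Fin n, v = (2:ℝ) • ee i ∨ v = -((2:ℝ) • ee i)}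
  | CType.D => DRoots n

/-- The standard positive system `Φ⁺`: roots whose first nonzero coordinate is positive. -/
def PhiPos (n : ℕ) (ct : CType) : Set (V n) :=
  {v | v ∈ Phi n ct ∧ ∃ i : Fin n, 0 < v i ∧ ∀ j : Fin n, j < i → v j = 0}

/-- The simple root `α_{i+1}` (`0`-based index `i`). -/
def alphaR (n : ℕ) (ct : CType) (i : Fin n) : V n :=
  if h : i.1 + 1 < n then ee i - ee ⟨i.1 + 1, h⟩
  else
    match ct with
    | CType.B => ee i
    | CType.C => (2:ℝ) • ee i
    | CType.D => ee ⟨n - 2, Nat.sub_lt i.pos (by norm_num)⟩ + ee i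

/-- The subsystem `Φ_I` generated by the simple roots indexed by `I`. -/
def PhiI (n : ℕ) (ct : CType) (I : Finset (Fin n)) : Set (V n) :=
  Phi n ct ∩ (Submodule.span ℝ (alphaR n ct '' (I : Set (Fin n))) : Set (V n))

/-- `λ` is `Φ_I`-regular. -/
def RegI (n : ℕ) (ct : CType) (I : Finset (Fin n)) (lam : V n) : Prop :=
  ∀ β ∈ PhiI n ct I, inn lam β ≠ 0

/-- `λ` is integral. -/
def IntegralW (n : ℕ) (ct : CType) (lam : V n) : Prop :=
  ∀ β ∈ Phi n ct, ∃ k : ℤ, 2 * inn lam β / inn β β = (k : ℝ)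

/-- `λ` is dominant. -/
def DominantW (n : ℕ) (ct : CType) (lam : V n) : Prop :=
  ∀ i : Fin n, 0 ≤ inn lam (alphaR n ct i)

/-- `μ` lies in the `W_I`-orbit of `λ` (`W_I` generated by the reflections `s_α`, `α ∈ I`). -/
def WIOrb (n : ℕ) (ct : CType) (I : Finset (Fin n)) : V n → V n → Prop :=
  Relation.ReflTransGen (fun x y => ∃ i ∈ I, y = sRefl (alphaR n ct i) x)

/-- `μ` lies in the `W`-orbit of `λ`. -/
def WOrb (n : ℕ) (ct : CType) : V n → V n → Prop := WIOrb n ct Finset.univ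

/-- `λ ∈ Λ_I⁺`. -/
def LamIPlus (n : ℕ) (ct : CType) (I : Finset (Fin n)) (lam : V n) : Prop :=
  IntegralW n ct lam ∧ ∀ i ∈ I, 0 < inn lam (alphaR n ct i)

/-- The sorted list `q_1 < q_2 < … < q_{m-1}` (`1`-based values) of indices of `Δ∖I`. -/
def Qlist (n : ℕ) (I : Finset (Fin n)) : List ℕ :=
  ((Finset.univ \ I).sort (· ≤ ·)).map (fun j => j.1 + 1)

/-- The number `m` of segments determined by `I`. -/
def mval (n : ℕ) (I : Finset (Fin n)) : ℕ := (Qlist n I).length + 1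

/-- `q_s`, with the conventions `q_0 = 0` and `q_m = n`. -/
def qval (n : ℕ) (I : Finset (Fin n)) (s : ℕ) : ℕ :=
  if s = 0 then 0 else if s < mval n I then (Qlist n I).getD (s - 1) 0 else n

/-- `I` is standard (automatic in types `B`, `C`). -/
def StandardI (n : ℕ) (ct : CType) (I : Finset (Fin n)) : Prop :=
  ct = CType.D → ∀ h : 2 ≤ n,
    ((⟨n - 2, by omega⟩ : Fin n) ∈ I ∨ (⟨n - 1, by omega⟩ : Fin n) ∉ I)

/-- `q_s`, corrected for nonstandard `I` (where `q_{m-1}` is replaced by `n`,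
so that the `(m-1)`-st segment is `(q_{m-2}, n]` and the `m`-th segment is empty). -/
def qv (n : ℕ) (ct : CType) (I : Finset (Fin n)) (s : ℕ) : ℕ :=
  if ¬ StandardI n ct I ∧ s = mval n I - 1 then n else qval n I s

/-- The segment length `n_s`. -/
def nsval (n : ℕ) (ct : CType) (I : Finset (Fin n)) (s : ℕ) : ℕ :=
  qv n ct I s - qv n ct I (s - 1)

/-- The (`0`-based) index `i` lies in the `s`-th segment, i.e. `q_{s-1} < i+1 ≤ q_s`. -/
def InSeg (n : ℕ) (ct : CType) (I : Finset (Fin n)) (s : ℕ) (i : Fin n) : Prop :=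
  qv n ct I (s - 1) < i.1 + 1 ∧ i.1 + 1 ≤ qv n ct I s

/-- `n_s^λ(a)`: the number of entries of the `s`-th segment of `λ` with absolute value `a`. -/
def nsl (n : ℕ) (ct : CType) (I : Finset (Fin n)) (lam : V n) (s : ℕ) (a : ℝ) : ℕ :=
  (Finset.univ.filter (fun i : Fin n => InSeg n ct I s i ∧ |lam i| = a)).card

/-- `a_t = λ̄_{q̄_t}` for `1 ≤ t < m̄`, and `a_{m̄} = 0`. -/
def aval (n : ℕ) (ct : CType) (J : Finset (Fin n)) (lbar : V n) (t : ℕ) : ℝ :=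
  if t < mval n J then
    (if h : qv n ct J t - 1 < n then lbar ⟨qv n ct J t - 1, h⟩ else 0)
  else 0

/-- `n_s^λ(a)` is maximal among all `Φ_I`-regular weights in the orbit of `λ`. -/
def IsMaxN (n : ℕ) (ct : CType) (I : Finset (Fin n)) (lam : V n) (s : ℕ) (a : ℝ) : Prop :=
  ∀ mu : V n, WOrb n ct lam mu → RegI n ct I mu →
    nsl n ct I mu s a ≤ nsl n ct I lam s a

/-- The exceptional configurations of Proposition 4.7 (types `B` and `C`, with
`shortR i` the short/long root `e_i` resp. `2e_i`). -/
def ExcBC (n : ℕ) (ct : CType) (I : Finset (Fin n)) (shortR : Fin n → V n)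
    (lam β : V n) : Prop :=
  ∃ s : ℕ, 1 ≤ s ∧ s < mval n I ∧ ∃ a : ℝ, 0 < a ∧
    nsl n ct I lam s a = 1 ∧
    nsl n ct I lam s 0 + nsl n ct I lam (mval n I) a = 1 ∧
    ((∃ i j : Fin n, InSeg n ct I s i ∧ InSeg n ct I s j ∧
        |lam i| = a ∧ lam j = 0 ∧ (β = shortR i ∨ β = ee i + ee j)) ∨
     (∃ i j : Fin n, InSeg n ct I s i ∧ InSeg n ct I (mval n I) j ∧
        ((lam i = a ∧ lam j = a) ∨ (lam i = -a ∧ lam j = -a)) ∧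
        (β = shortR i ∨ β = ee i + ee j)) ∨
     (∃ i j : Fin n, InSeg n ct I s i ∧ InSeg n ct I (mval n I) j ∧
        ((lam i = a ∧ lam j = -a) ∨ (lam i = -a ∧ lam j = a)) ∧
        (β = shortR i ∨ β = ee i - ee j)))

/-- The exceptional configurations of Proposition 4.7 (type `D`). -/
def ExcD (n : ℕ) (I : Finset (Fin n)) (lam β : V n) : Prop :=
  ∃ s : ℕ, 1 ≤ s ∧ s < mval n I ∧ ∃ a : ℝ, 0 < a ∧
    nsl n CType.D I lam s a = 1 ∧ nsl n CType.D I lam (mval n I) a = 1 ∧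
    nsl n CType.D I lam s 0 = 1 ∧ nsl n CType.D I lam (mval n I) 0 = 1 ∧
    ∃ i j k l : Fin n, InSeg n CType.D I s i ∧ InSeg n CType.D I s j ∧
      InSeg n CType.D I (mval n I) k ∧ InSeg n CType.D I (mval n I) l ∧
      lam j = 0 ∧ lam l = 0 ∧
      ((((lam i = a ∧ lam k = a) ∨ (lam i = -a ∧ lam k = -a)) ∧
          (β = ee i + ee j ∨ β = ee i + ee k)) ∨
       (((lam i = a ∧ lam k = -a) ∨ (lam i = -a ∧ lam k = a)) ∧
          (β = ee i + ee j ∨ β = ee i - ee k)))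

/-- The exceptional configurations in which `β` fails to be a linked root. -/
def Exc (n : ℕ) (ct : CType) (I : Finset (Fin n)) (lam β : V n) : Prop :=
  match ct with
  | CType.B => ExcBC n CType.B I (fun i => ee i) lam β
  | CType.C => ExcBC n CType.C I (fun i => (2:ℝ) • ee i) lam β
  | CType.D => ExcD n I lam β

/-- `β` is a linked root of the `Φ_I`-regular weight `λ` (for standard `I`). -/
def PlainLinked (n : ℕ) (ct : CType) (I : Finset (Fin n)) (lam β : V n) : Prop :=
  RegI n ct I lam ∧ β ∈ PhiPos n ct ∧ β ∉ PhiI n ct I ∧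
  RegI n ct I (sRefl β lam) ∧ sRefl β lam ≠ lam ∧ ¬ Exc n ct I lam β

/-- The transposition of the last two indices. -/
def swapLast (n : ℕ) (j : Fin n) : Fin n :=
  if j.1 = n - 1 then ⟨n - 2, Nat.sub_lt j.pos (by norm_num)⟩
  else if j.1 = n - 2 then ⟨n - 1, Nat.sub_lt j.pos (by norm_num)⟩
  else j

/-- The isomorphism `φ = s_{e_n}` (negating the last coordinate). -/
def phiW {n : ℕ} (x : V n) : V n := fun j => if j.1 = n - 1 then -x j else x j

/-- The image `φ(I)` of an index set under `φ` (interchanging `α_{n-1}` and `α_n`). -/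
def phiIdx (n : ℕ) (I : Finset (Fin n)) : Finset (Fin n) := I.image (swapLast n)

/-- `β` is a linked root of `λ`; for nonstandard `I` the notion is transported along `φ`. -/
def LinkedRoot (n : ℕ) (ct : CType) (I : Finset (Fin n)) (lam β : V n) : Prop :=
  if StandardI n ct I then PlainLinked n ct I lam β
  else PlainLinked n ct (phiIdx n I) (phiW lam) (phiW β)

/-- One step in a connecting chain: `y ∈ W_I x`, or `y = w s_β x` for a linked root `β` of `x`. -/
def ConnStep (n : ℕ) (ct : CType) (I : Finset (Fin n)) (x y : V n) : Prop :=
  RegI n ct I x ∧ RegI n ct I y ∧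
  (WIOrb n ct I x y ∨ ∃ β : V n, LinkedRoot n ct I x β ∧ WIOrb n ct I (sRefl β x) y)

/-- `λ ⟷ μ`: `λ` and `μ` are connected by a chain of linked roots. -/
def Conn (n : ℕ) (ct : CType) (I : Finset (Fin n)) (lam mu : V n) : Prop :=
  RegI n ct I lam ∧ RegI n ct I mu ∧
  Relation.ReflTransGen (ConnStep n ct I) lam mu

/-- The set `^IW^Jλ̄ = Wλ̄ ∩ Λ_I⁺` of weights parametrizing the simple modules. -/
def IWJset (n : ℕ) (ct : CType) (I : Finset (Fin n)) (lbar : V n) : Set (V n) :=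
  {mu | WOrb n ct lbar mu ∧ LamIPlus n ct I mu}

/-- `(S, S̄)` is a separable pair for the weight `λ`. -/
def IsSepPair (n : ℕ) (ct : CType) (I J : Finset (Fin n)) (lbar lam : V n)
    (S Sb : Finset ℕ) : Prop :=
  S.Nonempty ∧ Sb.Nonempty ∧
  S ⊆ Finset.Icc 1 (mval n I) ∧ Sb ⊆ Finset.Icc 1 (mval n J) ∧
  1 < mval n I ∧ 1 < mval n J ∧
  (∀ s ∈ S, ∀ t ∈ Sb, IsMaxN n ct I lam s (aval n ct J lbar t)) ∧
  (∀ s ∈ Finset.Icc 1 (mval n I), s ∉ S →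
     ∀ t ∈ Finset.Icc 1 (mval n J), t ∉ Sb →
       nsl n ct I lam s (aval n ct J lbar t) = 0) ∧
  (match ct with
   | CType.B => (mval n I ∈ S ↔ mval n J ∉ Sb)
   | CType.C => (mval n I ∈ S ↔ mval n J ∉ Sb)
   | CType.D => (mval n I ∈ S ↔ mval n J ∈ Sb))

/-- `𝒟`: the set of separable pairs of the system `(Φ, Φ_I, Φ_J)`. -/
def DSet (n : ℕ) (ct : CType) (I J : Finset (Fin n)) (lbar : V n) :
    Set (Finset ℕ × Finset ℕ) :=
  {p | ∀ lam ∈ IWJset n ct I lbar, IsSepPair n ct I J lbar lam p.1 p.2}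

/-- The four weakly separable pairs. -/
def IsWeakPair (n : ℕ) (I J : Finset (Fin n)) (p : Finset ℕ × Finset ℕ) : Prop :=
  p = (Finset.Icc 1 (mval n I - 1), {mval n J}) ∨
  p = (Finset.Icc 1 (mval n I), {mval n J}) ∨
  p = ({mval n I}, Finset.Icc 1 (mval n J - 1)) ∨
  p = ({mval n I}, Finset.Icc 1 (mval n J))

/-- The system `(Φ, Φ_I, Φ_J)` is separable. -/
def SepSys (n : ℕ) (ct : CType) (I J : Finset (Fin n)) (lbar : V n) : Prop :=
  (DSet n ct I J lbar).Nonempty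

/-- The system `(Φ, Φ_I, Φ_J)` is strongly separable. -/
def StronglySepSys (n : ℕ) (ct : CType) (I J : Finset (Fin n)) (lbar : V n) : Prop :=
  ∃ p ∈ DSet n ct I J lbar, ¬ IsWeakPair n I J p

/-- The system `(Φ, Φ_I, Φ_J)` is weakly separable. -/
def WeaklySepSys (n : ℕ) (ct : CType) (I J : Finset (Fin n)) (lbar : V n) : Prop :=
  SepSys n ct I J lbar ∧ ∀ p ∈ DSet n ct I J lbar, IsWeakPair n I J p

/-- The partial ordering on separable pairs: `(S₁,S̄₁) ≤ (S₂,S̄₂)` iff `S₁ ⊆ S₂`, `S̄₁ ⊇ S̄₂`. -/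
def pairLE (p q : Finset ℕ × Finset ℕ) : Prop := p.1 ⊆ q.1 ∧ q.2 ⊆ p.2

/-- Strict version of `pairLE`. -/
def pairLT (p q : Finset ℕ × Finset ℕ) : Prop := pairLE p q ∧ p ≠ q

/-- The generating relations of the equivalence `∼` on `𝒟`. -/
def PairRel (D : Set (Finset ℕ × Finset ℕ)) (p q : Finset ℕ × Finset ℕ) : Prop :=
  p ∈ D ∧ q ∈ D ∧ ((p.2 = q.2 ∧ p.1 ⊆ q.1) ∨ (p.1 = q.1 ∧ p.2 ⊆ q.2))

/-- The equivalence relation `∼` on separable pairs. -/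
def PairEquiv (D : Set (Finset ℕ × Finset ℕ)) :
    Finset ℕ × Finset ℕ → Finset ℕ × Finset ℕ → Prop :=
  Relation.EqvGen (PairRel D)

/-- A trivial separable pair. -/
def TrivialPair (n : ℕ) (ct : CType) (I J : Finset (Fin n)) (lbar : V n)
    (p : Finset ℕ × Finset ℕ) : Prop :=
  match ct with
  | CType.B | CType.C =>
    (∃ s0 : ℕ, 1 ≤ s0 ∧ s0 < mval n I ∧
       PairEquiv (DSet n ct I J lbar) p ({s0}, Finset.Icc 1 (mval n J))) ∨
    (∃ t0 : ℕ, 1 ≤ t0 ∧ t0 < mval n J ∧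
       PairEquiv (DSet n ct I J lbar) p (Finset.Icc 1 (mval n I), {t0}))
  | CType.D =>
    (∃ s0 : ℕ, 1 ≤ s0 ∧ s0 < mval n I ∧
       PairEquiv (DSet n ct I J lbar) p ({s0}, Finset.Icc 1 (mval n J - 1))) ∨
    (∃ t0 : ℕ, 1 ≤ t0 ∧ t0 < mval n J ∧
       PairEquiv (DSet n ct I J lbar) p (Finset.Icc 1 (mval n I - 1), {t0}))

/-- The set of blocks: equivalence classes of `^IW^Jλ̄` under `⟷`. -/
def BlockSet (n : ℕ) (ct : CType) (I : Finset (Fin n)) (lbar : V n) : Set (Set (V n)) :=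
  {Cl | ∃ lam ∈ IWJset n ct I lbar,
     Cl = {mu | mu ∈ IWJset n ct I lbar ∧ Conn n ct I lam mu}}

/-- The parity `P(λ)` of the number of negative entries of `λ`. -/
def Pfun (n : ℕ) (lam : V n) : ℕ :=
  (Finset.univ.filter (fun i : Fin n => lam i < 0)).card % 2

/-- A fundamental chain `c 1 ∼ c 2 ∼ … ∼ c k` in `𝒟`. -/
def IsFundChain (D : Set (Finset ℕ × Finset ℕ)) (c : ℕ → Finset ℕ × Finset ℕ)
    (k : ℕ) : Prop :=
  1 ≤ k ∧ (∀ i, 1 ≤ i → i ≤ k → c i ∈ D) ∧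
  (∀ i, 1 ≤ i → i < k →
     ((c i).1 = (c (i+1)).1 ∨ (c i).2 = (c (i+1)).2) ∧
     (pairLT (c i) (c (i+1)) ∨ pairLT (c (i+1)) (c i)))

/-- The list of parts of the partition `π_I`. -/
def piParts (n : ℕ) (ct : CType) (I : Finset (Fin n)) : List ℕ :=
  (List.range (mval n I - 1)).map (fun s => nsval n ct I (s+1)) ++
  (List.range (mval n I - 1)).map (fun s => nsval n ct I (s+1)) ++
  (match ct with
   | CType.B => [2 * nsval n ct I (mval n I) + 1]
   | CType.C => [2 * nsval n ct I (mval n I)]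
   | CType.D => if nsval n ct I (mval n I) = 0 then []
                else [2 * nsval n ct I (mval n I) - 1, 1])

/-- The `i`-th part (`1`-based) of the partition with list of parts `L`. -/
def partAt (L : List ℕ) (i : ℕ) : ℕ :=
  (L.mergeSort (fun a b => decide (b ≤ a))).getD (i - 1) 0

/-- The `i`-th part (`1`-based) of the dual partition `π^t`: the number of parts `≥ i`. -/
def dualAt (L : List ℕ) (i : ℕ) : ℕ :=
  (L.filter (fun x => decide (i ≤ x))).length

/-- `k` is compatible with the system `(Φ, Φ_I, Φ_J)`. -/
def CompatibleK (n : ℕ) (ct : CType) (I J : Finset (Fin n)) (k : ℕ) : Prop :=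
  1 ≤ k ∧ k ≤ 2 * mval n I - 1 ∧
  (match ct with
   | CType.B =>
     (Odd k ∧ k ≤ partAt (piParts n CType.B J) 2 ∧
        2 * nsval n CType.B J (mval n J) + 1 ≤ k ∧
        partAt (piParts n CType.B I) k ≤ 2 * nsval n CType.B I (mval n I) + 1) ∨
     (Even k ∧ k ≤ 2 * nsval n CType.B J (mval n J) ∧
        2 * nsval n CType.B I (mval n I) + 1 ≤ partAt (piParts n CType.B I) k)
   | CType.C =>
     (Odd k ∧ k ≤ partAt (piParts n CType.C J) 2 ∧
        2 * nsval n CType.C J (mval n J) + 1 ≤ k ∧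
        partAt (piParts n CType.C I) k ≤ 2 * nsval n CType.C I (mval n I)) ∨
     (Even k ∧ k ≤ 2 * nsval n CType.C J (mval n J) ∧
        2 * nsval n CType.C I (mval n I) + 1 ≤ partAt (piParts n CType.C I) k)
   | CType.D =>
     (Even k ∧ k ≤ partAt (piParts n CType.D J) 2 ∧
        2 * nsval n CType.D J (mval n J) ≤ k ∧
        2 * nsval n CType.D I (mval n I) ≤ partAt (piParts n CType.D I) k) ∨
     (Odd k ∧ k ≤ 2 * nsval n CType.D J (mval n J) - 1 ∧
        partAt (piParts n CType.D I) k ≤ 2 * nsval n CType.D I (mval n I) - 1))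

/-- `s_{e_{k_1}}^{ε_1} ⋯ s_{e_{k_r}}^{ε_r} μ`. -/
def applyFlips (n : ℕ) (ks : ℕ → Fin n) (eps : ℕ → Bool) : ℕ → V n → V n
  | 0, v => v
  | (r+1), v =>
      if eps (r+1) then sRefl (ee (ks (r+1))) (applyFlips n ks eps r v)
      else applyFlips n ks eps r v

end

/-!
Order pairs by reversed inclusion in the first coordinate and inclusion in the second, so that a
descending chain becomes an ascending one in the lattice `(Finset ℕ)ᵒᵈ × Finset ℕ`. A chain step
cannot change whether `m ∈ S`, and the separable pairs with a given answer contain `x ⊔ y ⊓ z`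
whenever they contain `x`, `y`, `z` and `x ≤ z`. Given a chain `c 0, …, c n` with `c 0 ≤ c n`, the
partial suprema of `c j ⊓ c n` therefore form another chain with the same endpoints, except that it
is stationary wherever `c` descends; a shortest chain hence never descends. Being ascending, it
cannot return to an earlier coordinate after two or more steps, since those steps could be replaced
by one.
-/

section Geodesics

variable {X : Type*} {G : SimpleGraph X} {f : ℕ → X} {n i j : ℕ}

theorem edist_le_sub_of_edist_succ_le_one (hf : ∀ l < n, G.edist (f l) (f (l + 1)) ≤ 1)
    (hij : i ≤ j) (hjn : j ≤ n) : G.edist (f i) (f j) ≤ (j - i : ℕ) := by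
  induction j, hij using Nat.le_induction with
  | base => simp
  | succ j hij ih =>
    calc G.edist (f i) (f (j + 1))
        ≤ G.edist (f i) (f j) + G.edist (f j) (f (j + 1)) := G.edist_triangle
      _ ≤ (j - i : ℕ) + 1 := add_le_add (ih (by omega)) (hf j (by omega))
      _ = (j + 1 - i : ℕ) := by rw [Nat.sub_add_comm hij]; push_cast; rfl

theorem sub_le_edist_of_le_edist (hf : ∀ l < n, G.edist (f l) (f (l + 1)) ≤ 1)
    (hn : n ≤ G.edist (f 0) (f n)) (hij : i ≤ j) (hjn : j ≤ n) :
    (j - i : ℕ) ≤ G.edist (f i) (f j) := by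
  have through : (n : ℕ∞) ≤ i + G.edist (f i) (f j) + (n - j : ℕ) :=
    calc (n : ℕ∞) ≤ G.edist (f 0) (f n) := hn
      _ ≤ G.edist (f 0) (f j) + G.edist (f j) (f n) := G.edist_triangle
      _ ≤ G.edist (f 0) (f i) + G.edist (f i) (f j) + G.edist (f j) (f n) := by
        gcongr; exact G.edist_triangle
      _ ≤ i + G.edist (f i) (f j) + (n - j : ℕ) := by
        gcongr
        · exact edist_le_sub_of_edist_succ_le_one hf i.zero_le (hij.trans hjn)
        · exact edist_le_sub_of_edist_succ_le_one hf hjn le_rfl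
  cases h : G.edist (f i) (f j) with
  | top => exact le_top
  | coe d =>
    rw [h] at through
    norm_cast at through ⊢
    omega

end Geodesics

/-- Closure under clamping from below by a member `x` and from above by a member `z ≥ x`. -/
def ClampClosed {L : Type*} [Lattice L] (E : Set L) : Prop :=
  ∀ ⦃x⦄, x ∈ E → ∀ ⦃y⦄, y ∈ E → ∀ ⦃z⦄, z ∈ E → x ≤ z → x ⊔ y ⊓ z ∈ E

section PartialSups

variable {L : Type*} [Lattice L] {c : ℕ → L} {n : ℕ}

theorem ClampClosed.partialSups_inf_mem {E : Set L} (hE : ClampClosed E)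
    (hc : ∀ i ≤ n, c i ∈ E) (h0 : c 0 ≤ c n) {i : ℕ} (hi : i ≤ n) :
    partialSups (fun j => c j ⊓ c n) i ∈ E := by
  induction i with
  | zero => simpa [h0] using hc 0 hi
  | succ i ih =>
    rw [partialSups_add_one]
    exact hE (ih (by omega)) (hc _ hi) (hc n le_rfl) (partialSups_le _ _ _ fun _ _ => inf_le_right)

theorem partialSups_inf_self (c : ℕ → L) (n : ℕ) : partialSups (fun j => c j ⊓ c n) n = c n :=
  le_antisymm (partialSups_le _ _ _ fun _ _ => inf_le_right)
    (by simpa using le_partialSups (fun j => c j ⊓ c n) n)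

end PartialSups

section FundGraph

variable {α β : Type*} [Lattice α] [Lattice β]

/-- The graph on a product of lattices whose walks are the fundamental chains in `E`: its edges join
comparable members of `E` that differ in exactly one coordinate. -/
def fundGraph (E : Set (α × β)) : SimpleGraph (α × β) where
  Adj x y := x ∈ E ∧ y ∈ E ∧ (x.1 = y.1 ∨ x.2 = y.2) ∧ (x < y ∨ y < x)
  symm := ⟨fun _ _ ⟨hx, hy, hcoord, hlt⟩ =>
    ⟨hy, hx, hcoord.imp Eq.symm Eq.symm, hlt.symm⟩⟩
  loopless := ⟨fun _ h => h.2.2.2.elim (lt_irrefl _) (lt_irrefl _)⟩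

variable {E : Set (α × β)} {c : ℕ → α × β} {z : α × β} {n i j : ℕ}

theorem edist_fundGraph_le_one {x y : α × β} (hx : x ∈ E) (hy : y ∈ E) (hxy : x ≤ y)
    (hcoord : x.1 = y.1 ∨ x.2 = y.2) : (fundGraph E).edist x y ≤ 1 := by
  rw [SimpleGraph.edist_le_one_iff_adj_or_eq]
  exact hxy.lt_or_eq.imp_left fun hlt => ⟨hx, hy, hcoord, .inl hlt⟩

theorem fst_partialSups_inf_succ (h : (c (i + 1)).1 ≤ (c i).1) :
    (partialSups (fun j => c j ⊓ z) (i + 1)).1 = (partialSups (fun j => c j ⊓ z) i).1 := by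
  rw [partialSups_add_one]
  exact sup_eq_left.2 ((inf_le_inf_right z.1 h).trans (le_partialSups (fun j => c j ⊓ z) i).1)

theorem snd_partialSups_inf_succ (h : (c (i + 1)).2 ≤ (c i).2) :
    (partialSups (fun j => c j ⊓ z) (i + 1)).2 = (partialSups (fun j => c j ⊓ z) i).2 := by
  rw [partialSups_add_one]
  exact sup_eq_left.2 ((inf_le_inf_right z.2 h).trans (le_partialSups (fun j => c j ⊓ z) i).2)

theorem edist_partialSups_inf_succ_le_one (hE : ClampClosed E)
    (hadj : ∀ l < n, (fundGraph E).Adj (c l) (c (l + 1))) (h0 : c 0 ≤ c n) (hi : i < n) :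
    (fundGraph E).edist (partialSups (fun j => c j ⊓ c n) i)
      (partialSups (fun j => c j ⊓ c n) (i + 1)) ≤ 1 := by
  have hmem : ∀ l ≤ n, c l ∈ E := by
    rintro (_ | l) hl
    · exact (hadj 0 (by omega)).1
    · exact (hadj l hl).2.1
  refine edist_fundGraph_le_one (hE.partialSups_inf_mem hmem h0 hi.le)
    (hE.partialSups_inf_mem hmem h0 hi) (partialSups_monotone _ i.le_succ) ?_
  exact (hadj i hi).2.2.1.imp (fun h => (fst_partialSups_inf_succ h.ge).symm)
    fun h => (snd_partialSups_inf_succ h.ge).symm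

theorem strictMonoOn_of_le_edist_fundGraph (hE : ClampClosed E)
    (hadj : ∀ l < n, (fundGraph E).Adj (c l) (c (l + 1)))
    (hn : n ≤ (fundGraph E).edist (c 0) (c n)) (h0 : c 0 ≤ c n) :
    StrictMonoOn c (Set.Iic n) := by
  refine strictMonoOn_Iic_of_lt_succ fun i hi => (hadj i hi).2.2.2.resolve_right fun hdesc => ?_
  set a := partialSups fun j => c j ⊓ c n with ha
  have a_zero : a 0 = c 0 := by simpa [ha] using h0
  have a_last : a n = c n := partialSups_inf_self c n
  have a_step : ∀ l < n, (fundGraph E).edist (a l) (a (l + 1)) ≤ 1 := fun _ hl =>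
    edist_partialSups_inf_succ_le_one hE hadj h0 hl
  have stationary : a (i + 1) = a i :=
    Prod.ext (fst_partialSups_inf_succ hdesc.le.1) (snd_partialSups_inf_succ hdesc.le.2)
  have moves := sub_le_edist_of_le_edist a_step (by rwa [a_zero, a_last]) i.le_succ hi
  simp [stationary] at moves

theorem eq_add_one_of_coord_eq_of_le_edist (hadj : ∀ l < n, (fundGraph E).Adj (c l) (c (l + 1)))
    (hn : n ≤ (fundGraph E).edist (c 0) (c n)) (hmono : StrictMonoOn c (Set.Iic n))
    (hij : i < j) (hjn : j ≤ n) (hcoord : (c i).1 = (c j).1 ∨ (c i).2 = (c j).2) :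
    j = i + 1 := by
  obtain ⟨j, rfl⟩ := Nat.exists_eq_add_of_lt hij
  have hlt : c i < c (i + j + 1) := hmono (hij.le.trans hjn) hjn hij
  have near : (fundGraph E).edist (c i) (c (i + j + 1)) ≤ 1 :=
    edist_fundGraph_le_one (hadj i (by omega)).1 (hadj (i + j) hjn).2.1 hlt.le hcoord
  have far := sub_le_edist_of_le_edist
    (fun l hl => (SimpleGraph.edist_eq_one_iff_adj.2 (hadj l hl)).le) hn hij.le hjn
  have : i + j + 1 - i ≤ 1 := by exact_mod_cast far.trans near
  omega

end FundGraph

section FundChain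

/-- The identification of pairs `(S, S̄)` with the lattice in which `≤` is the reverse of
`pairLE`. -/
def pairEquivDual : Finset ℕ × Finset ℕ ≃ (Finset ℕ)ᵒᵈ × Finset ℕ :=
  OrderDual.toDual.prodCongr (Equiv.refl _)

theorem pairEquivDual_le_iff {p q : Finset ℕ × Finset ℕ} :
    pairEquivDual p ≤ pairEquivDual q ↔ pairLE q p :=
  Iff.rfl

theorem pairEquivDual_lt_iff {p q : Finset ℕ × Finset ℕ} :
    pairEquivDual p < pairEquivDual q ↔ pairLT q p := by
  rw [lt_iff_le_and_ne, pairEquivDual_le_iff, pairEquivDual.injective.ne_iff, ne_comm]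
  rfl

/-- A fundamental chain of minimal length among those in `D` with the same endpoints. -/
def IsShortestFundChain (D : Set (Finset ℕ × Finset ℕ)) (c : ℕ → Finset ℕ × Finset ℕ)
    (k : ℕ) : Prop :=
  IsFundChain D c k ∧
    ∀ c' k', IsFundChain D c' k' → c' 1 = c 1 → c' k' = c k → k ≤ k'

variable {D E : Set (Finset ℕ × Finset ℕ)} {c : ℕ → Finset ℕ × Finset ℕ} {k i j : ℕ}

theorem IsFundChain.mono (h : IsFundChain E c k) (hED : E ⊆ D) : IsFundChain D c k :=
  ⟨h.1, fun i hi hik => hED (h.2.1 i hi hik), h.2.2⟩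

theorem IsShortestFundChain.of_subset (h : IsShortestFundChain D c k) (hED : E ⊆ D)
    (hc : IsFundChain E c k) : IsShortestFundChain E c k :=
  ⟨hc, fun c' k' h' => h.2 c' k' (h'.mono hED)⟩

theorem IsFundChain.adj (h : IsFundChain E c k) (hi : i < k - 1) :
    (fundGraph (pairEquivDual.symm ⁻¹' E)).Adj (pairEquivDual (c (i + 1)))
      (pairEquivDual (c (i + 1 + 1))) := by
  obtain ⟨-, hmem, hstep⟩ := h
  obtain ⟨hcoord, hlt⟩ := hstep (i + 1) (by omega) (by omega)
  exact ⟨hmem _ (by omega) (by omega), hmem _ (by omega) (by omega), hcoord,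
    hlt.symm.imp pairEquivDual_lt_iff.2 pairEquivDual_lt_iff.2⟩

theorem isFundChain_of_walk {p q : Finset ℕ × Finset ℕ} (hp : p ∈ E)
    (w : (fundGraph (pairEquivDual.symm ⁻¹' E)).Walk (pairEquivDual p) (pairEquivDual q)) :
    IsFundChain E (fun i => pairEquivDual.symm (w.getVert (i - 1))) (w.length + 1) := by
  refine ⟨by omega, ?_, ?_⟩
  · rintro (_ | _ | i) hi hil
    · omega
    · simpa using hp
    · exact (w.adj_getVert_succ (by omega : i < w.length)).2.1
  · rintro (_ | i) hi hil
    · omega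
    · obtain ⟨-, -, hcoord, hlt⟩ := w.adj_getVert_succ (by omega : i < w.length)
      exact ⟨hcoord, hlt.symm.imp pairEquivDual_lt_iff.1 pairEquivDual_lt_iff.1⟩

theorem IsShortestFundChain.le_edist (h : IsShortestFundChain E c k) :
    (k - 1 : ℕ) ≤ (fundGraph (pairEquivDual.symm ⁻¹' E)).edist (pairEquivDual (c 1))
      (pairEquivDual (c k)) := by
  obtain ⟨⟨hk, hmem, -⟩, hmin⟩ := h
  refine le_iInf fun w => ?_
  have : k ≤ w.length + 1 :=
    hmin _ _ (isFundChain_of_walk (hmem 1 le_rfl hk) w) (by simp) (by simp)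
  exact_mod_cast (by omega : k - 1 ≤ w.length)

theorem IsShortestFundChain.strictMonoOn (h : IsShortestFundChain E c k)
    (hE : ClampClosed (pairEquivDual.symm ⁻¹' E)) (hle : pairLE (c k) (c 1)) :
    StrictMonoOn (fun i => pairEquivDual (c (i + 1))) (Set.Iic (k - 1)) := by
  obtain ⟨k, rfl⟩ := Nat.exists_eq_add_of_le' h.1.1
  exact strictMonoOn_of_le_edist_fundGraph hE (fun _ => h.1.adj) h.le_edist hle

theorem IsShortestFundChain.pairLT_succ (h : IsShortestFundChain E c k)
    (hE : ClampClosed (pairEquivDual.symm ⁻¹' E)) (hle : pairLE (c k) (c 1))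
    (hi : 1 ≤ i) (hik : i < k) : pairLT (c (i + 1)) (c i) := by
  obtain ⟨i, rfl⟩ := Nat.exists_eq_add_of_le' hi
  exact pairEquivDual_lt_iff.1 <| h.strictMonoOn hE hle (Set.mem_Iic.2 (by omega))
    (Set.mem_Iic.2 (by omega)) i.lt_succ_self

theorem IsShortestFundChain.eq_add_one_of_coord_eq (h : IsShortestFundChain E c k)
    (hE : ClampClosed (pairEquivDual.symm ⁻¹' E)) (hle : pairLE (c k) (c 1))
    (hi : 1 ≤ i) (hij : i < j) (hjk : j ≤ k)
    (hcoord : (c i).1 = (c j).1 ∨ (c i).2 = (c j).2) : j = i + 1 := by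
  obtain ⟨i, rfl⟩ := Nat.exists_eq_add_of_le' hi
  obtain ⟨j, rfl⟩ := Nat.exists_eq_add_of_le' (hi.trans hij.le)
  obtain ⟨k, rfl⟩ := Nat.exists_eq_add_of_le' h.1.1
  exact congrArg (· + 1) <| eq_add_one_of_coord_eq_of_le_edist (fun _ => h.1.adj) h.le_edist
    (h.strictMonoOn hE hle) (by omega) (by omega) hcoord

end FundChain

section SeparablePairs

variable {n : ℕ} {ct : CType} {I J : Finset (Fin n)} {lbar lam : V n}

theorem IsSepPair.clamp {S₁ S₂ S₃ T₁ T₂ T₃ : Finset ℕ} (h₁ : IsSepPair n ct I J lbar lam S₁ T₁)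
    (h₂ : IsSepPair n ct I J lbar lam S₂ T₂) (h₃ : IsSepPair n ct I J lbar lam S₃ T₃)
    (hS : S₃ ⊆ S₁) (hm : mval n I ∈ S₁ → mval n I ∈ S₃) :
    IsSepPair n ct I J lbar lam (S₁ ∩ (S₂ ∪ S₃)) (T₁ ∪ T₂ ∩ T₃) := by
  obtain ⟨-, neT₁, subS₁, subT₁, one_lt_m, one_lt_mbar, max₁, zero₁, last₁⟩ := h₁
  obtain ⟨-, -, -, subT₂, -, -, max₂, zero₂, -⟩ := h₂
  obtain ⟨neS₃, -, -, -, -, -, max₃, zero₃, last₃⟩ := h₃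
  refine ⟨neS₃.mono (Finset.subset_inter hS Finset.subset_union_right),
    neT₁.mono Finset.subset_union_left, Finset.inter_subset_left.trans subS₁,
    Finset.union_subset subT₁ (Finset.inter_subset_left.trans subT₂), one_lt_m, one_lt_mbar,
    ?maximal, ?zero, ?last⟩
  case maximal =>
    intro s hs t ht
    simp only [Finset.mem_inter, Finset.mem_union] at hs ht
    obtain ⟨hs₁, hs₂ | hs₃⟩ := hs <;> obtain ht₁ | ⟨ht₂, ht₃⟩ := ht
    exacts [max₁ s hs₁ t ht₁, max₂ s hs₂ t ht₂, max₁ s hs₁ t ht₁, max₃ s hs₃ t ht₃]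
  case zero =>
    intro s hs_mem hs t ht_mem ht
    simp only [Finset.mem_inter, Finset.mem_union, not_and_or, not_or] at hs ht
    obtain ⟨ht₁, ht₂ | ht₃⟩ := ht <;> obtain hs₁ | ⟨hs₂, hs₃⟩ := hs
    exacts [zero₁ s hs_mem hs₁ t ht_mem ht₁, zero₂ s hs_mem hs₂ t ht_mem ht₂,
      zero₁ s hs_mem hs₁ t ht_mem ht₁, zero₃ s hs_mem hs₃ t ht_mem ht₃]
  case last =>
    have hmS := @hS (mval n I)
    cases ct <;> simp only [Finset.mem_inter, Finset.mem_union] at * <;> tauto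

theorem IsSepPair.last_mem_iff_of_coord_eq {S T S' T' : Finset ℕ}
    (h : IsSepPair n ct I J lbar lam S T) (h' : IsSepPair n ct I J lbar lam S' T')
    (hcoord : S = S' ∨ T = T') : mval n I ∈ S ↔ mval n I ∈ S' := by
  obtain rfl | rfl := hcoord
  · rfl
  · obtain ⟨-, -, -, -, -, -, -, -, last⟩ := h
    obtain ⟨-, -, -, -, -, -, -, -, last'⟩ := h'
    cases ct <;> exact last.trans last'.symm

/-- The separable pairs whose first component contains the last index `m` if and only if that of
`p` does. A fundamental chain through `p` stays in this set. -/
def DSetLike (n : ℕ) (ct : CType) (I J : Finset (Fin n)) (lbar : V n)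
    (p : Finset ℕ × Finset ℕ) : Set (Finset ℕ × Finset ℕ) :=
  {q ∈ DSet n ct I J lbar | mval n I ∈ q.1 ↔ mval n I ∈ p.1}

theorem clampClosed_DSetLike (p : Finset ℕ × Finset ℕ) :
    ClampClosed (pairEquivDual.symm ⁻¹' DSetLike n ct I J lbar p) := by
  rintro x ⟨hx, hmx⟩ y ⟨hy, hmy⟩ z ⟨hz, hmz⟩ hxz
  refine ⟨fun lam hlam => (hx lam hlam).clamp (hy lam hlam) (hz lam hlam)
    hxz.1 (hmz.trans hmx.symm).2, ?_⟩
  change mval n I ∈ (pairEquivDual.symm x).1 ∩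
    ((pairEquivDual.symm y).1 ∪ (pairEquivDual.symm z).1) ↔ _
  rw [Finset.mem_inter, Finset.mem_union, hmx, hmy, hmz, or_self, and_self]

theorem IsFundChain.isFundChain_DSetLike {c : ℕ → Finset ℕ × Finset ℕ} {k : ℕ}
    (hne : (IWJset n ct I lbar).Nonempty) (h : IsFundChain (DSet n ct I J lbar) c k) :
    IsFundChain (DSetLike n ct I J lbar (c 1)) c k := by
  obtain ⟨hk, hmem, hstep⟩ := h
  obtain ⟨lam, hlam⟩ := hne
  refine ⟨hk, fun i hi hik => ⟨hmem i hi hik, ?_⟩, hstep⟩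
  induction i, hi using Nat.le_induction with
  | base => rfl
  | succ i hi ih =>
    have hlast := (hmem i hi (by omega) lam hlam).last_mem_iff_of_coord_eq
      (hmem (i + 1) (by omega) hik lam hlam) (hstep i hi (by omega)).1
    exact hlast.symm.trans (ih (by omega))

end SeparablePairs

/-- Lemma 6.5 / `splem7`. -/
theorem statement10 (n : ℕ) (ct : CType) (I J : Finset (Fin n)) (lbar : V n)
    (hdom : DominantW n ct lbar) (hint : IntegralW n ct lbar)
    (hJ : ∀ i : Fin n, i ∈ J ↔ inn lbar (alphaR n ct i) = 0)
    (hA : 0 < aval n ct J lbar (mval n J - 1))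
    (hne : (IWJset n ct I lbar).Nonempty)
    (p p' : Finset ℕ × Finset ℕ)
    (hp : p ∈ DSet n ct I J lbar) (hp' : p' ∈ DSet n ct I J lbar)
    (hgt : pairLT p' p) (hequiv : PairEquiv (DSet n ct I J lbar) p p')
    (c : ℕ → Finset ℕ × Finset ℕ) (k : ℕ)
    (hchain : IsFundChain (DSet n ct I J lbar) c k) (hc1 : c 1 = p) (hck : c k = p')
    (hshort : ∀ (c' : ℕ → Finset ℕ × Finset ℕ) (k' : ℕ),
      IsFundChain (DSet n ct I J lbar) c' k' → c' 1 = p → c' k' = p' → k ≤ k') :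
    (∀ i, 1 ≤ i → i < k → ((c i).1 = (c (i+1)).1 ∨ (c i).2 = (c (i+1)).2)) ∧
    (∀ i j, 1 ≤ i → i < j → j ≤ k → j ≠ i + 1 →
       (c i).1 ≠ (c j).1 ∧ (c i).2 ≠ (c j).2) ∧
    (∀ i, 1 ≤ i → i < k → pairLT (c (i+1)) (c i)) := by
  subst hc1 hck
  have hshortest : IsShortestFundChain (DSetLike n ct I J lbar (c 1)) c k :=
    IsShortestFundChain.of_subset ⟨hchain, hshort⟩ (Set.sep_subset _ _)
      (hchain.isFundChain_DSetLike hne)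
  have hclosed := clampClosed_DSetLike (n := n) (ct := ct) (I := I) (J := J) (lbar := lbar) (c 1)
  refine ⟨fun i hi hik => (hchain.2.2 i hi hik).1, fun i j hi hij hjk hne_succ => ?_,
    fun i hi hik => hshortest.pairLT_succ hclosed hgt.1 hi hik⟩
  exact not_or.1 fun hcoord =>
    hne_succ (hshortest.eq_add_one_of_coord_eq hclosed hgt.1 hi hij hjk hcoord)

end JantzenBlocks
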